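/- Explicit separatrix solution of the quadrupolar Hamiltonian (Lemma 5.1, part 1). Let L_1 > 0, 0 < Γ̃_2 < √(3/5)·L_1, and let χ, A_2 be as defined. For t ∈ ℝ let γ_1(t) ∈ (0, π) be determined by cos γ_1(t) = √(3/5)·sinh(A_2 t)/√(χ² + (1 + χ²) sinh²(A_2 t)), let Γ_1(t) = Γ̃_2 √(5/3)·√(1 + (3/5)(L_1²/Γ̃_2²) sinh²(A_2 t))/cosh(A_2 t), and for any γ̃_2^0 ∈ ℝ let γ̃_2(t) = γ̃_2^0 + (2Γ̃_2/L_1²)t + arctan(χ^{−1} tanh(A_2 t)). Then: (i) for all t ∈ ℝ, Γ̃_2 < Γ_1(t) ≤ L_1 and (1 − Γ̃_2²/Γ_1(t)²)·sin²γ_1(t) = 2/5; (ii) the curve t ↦ (γ_1(t), Γ_1(t), γ̃_2(t), Γ̃_2) is a solution of the Hamiltonian system dγ_1/dt = ∂H_0^{12}/∂Γ_1, dΓ_1/dt = −∂H_0^{12}/∂γ_1, dγ̃_2/dt = ∂H_0^{12}/∂Γ̃_2, dΓ̃_2/dt = 0. -/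

import Mathlib

noncomputable section

open Real

/-- The quadrupolar model Hamiltonian
`H₀¹²(γ₁, Γ₁) = (1 − Γ₁²/L₁²)·[2 − 5(1 − Γ̃₂²/Γ₁²) sin²γ₁] + Γ̃₂²/L₁²`,
with parameters `L1` and `G2 = Γ̃₂`; it does not depend on the angle `γ̃₂`
conjugate to `Γ̃₂`. -/
def H012 (L1 γ1 Γ1 G2 : ℝ) : ℝ :=
  (1 - Γ1 ^ 2 / L1 ^ 2) * (2 - 5 * (1 - G2 ^ 2 / Γ1 ^ 2) * Real.sin γ1 ^ 2) + G2 ^ 2 / L1 ^ 2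

/-- The partial derivative of `H012` in the action `Γ₁`. -/
theorem hasDerivAt_H012_action (L1 γ G2 : ℝ) {Γ : ℝ} (hΓ : Γ ≠ 0) :
    HasDerivAt (fun x => H012 L1 γ x G2)
      (-(2 * Γ / L1 ^ 2) * (2 - 5 * (1 - G2 ^ 2 / Γ ^ 2) * Real.sin γ ^ 2)
        - 10 * (1 - Γ ^ 2 / L1 ^ 2) * (G2 ^ 2 / Γ ^ 3) * Real.sin γ ^ 2) Γ := by
  unfold H012
  have hsq : HasDerivAt (fun x : ℝ => x ^ 2) (2 * Γ) Γ := by simpa using hasDerivAt_pow 2 Γ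
  have hinv : HasDerivAt (fun x : ℝ => G2 ^ 2 / x ^ 2) (-(2 * G2 ^ 2 / Γ ^ 3)) Γ := by
    refine ((hasDerivAt_const Γ (G2 ^ 2)).fun_div hsq (pow_ne_zero 2 hΓ)).congr_deriv ?_
    field_simp
    ring
  refine ((((hsq.div_const (L1 ^ 2)).const_sub 1).fun_mul
    ((((hinv.const_sub 1).const_mul 5).mul_const (Real.sin γ ^ 2)).const_sub 2)).add_const
      (G2 ^ 2 / L1 ^ 2)).congr_deriv ?_
  ring

/-- The partial derivative of `H012` in the angle `γ₁`. -/
theorem hasDerivAt_H012_angle (L1 γ Γ G2 : ℝ) :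
    HasDerivAt (fun x => H012 L1 x Γ G2)
      (-(10 * (1 - Γ ^ 2 / L1 ^ 2) * (1 - G2 ^ 2 / Γ ^ 2) * (Real.sin γ * Real.cos γ))) γ := by
  unfold H012
  refine ((((((Real.hasDerivAt_sin γ).fun_pow 2).const_mul
    (5 * (1 - G2 ^ 2 / Γ ^ 2))).const_sub 2).const_mul (1 - Γ ^ 2 / L1 ^ 2)).add_const
      (G2 ^ 2 / L1 ^ 2)).congr_deriv ?_
  norm_num
  ring

/-- The partial derivative of `H012` in the action `Γ̃₂`. -/
theorem hasDerivAt_H012_parameter (L1 γ Γ G2 : ℝ) :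
    HasDerivAt (fun x => H012 L1 γ Γ x)
      (10 * (1 - Γ ^ 2 / L1 ^ 2) * (G2 / Γ ^ 2) * Real.sin γ ^ 2 + 2 * G2 / L1 ^ 2) G2 := by
  unfold H012
  have hsq : HasDerivAt (fun x : ℝ => x ^ 2) (2 * G2) G2 := by simpa using hasDerivAt_pow 2 G2
  refine (((((((hsq.div_const (Γ ^ 2)).const_sub 1).const_mul 5).mul_const
    (Real.sin γ ^ 2)).const_sub 2).const_mul (1 - Γ ^ 2 / L1 ^ 2)).fun_add
      (hsq.div_const (L1 ^ 2))).congr_deriv ?_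
  ring

set_option maxHeartbeats 1000000 in
/-- **Explicit separatrix solution of the quadrupolar Hamiltonian (Lemma 5.1, part 1).** -/
theorem quadrupolar_separatrix_solution
    (L1 G2 : ℝ) (hL1 : 0 < L1) (hG2 : 0 < G2)
    (hlt : G2 < Real.sqrt (3 / 5) * L1) (γ20 : ℝ) :
    let χ : ℝ := Real.sqrt (2 / 3) * (G2 / L1) / Real.sqrt (1 - (5 / 3) * G2 ^ 2 / L1 ^ 2)
    let A2 : ℝ := (6 / L1) * Real.sqrt (2 / 3) * Real.sqrt (1 - (5 / 3) * G2 ^ 2 / L1 ^ 2)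
    -- `γ₁(t) ∈ (0,π)` is determined by the formula for its cosine
    let γ1 : ℝ → ℝ := fun t => Real.arccos (Real.sqrt (3 / 5) * Real.sinh (A2 * t) /
      Real.sqrt (χ ^ 2 + (1 + χ ^ 2) * Real.sinh (A2 * t) ^ 2))
    let Γ1 : ℝ → ℝ := fun t => G2 * Real.sqrt (5 / 3) *
      Real.sqrt (1 + (3 / 5) * (L1 ^ 2 / G2 ^ 2) * Real.sinh (A2 * t) ^ 2) / Real.cosh (A2 * t)
    let γ2 : ℝ → ℝ := fun t => γ20 + (2 * G2 / L1 ^ 2) * t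
      + Real.arctan (χ⁻¹ * Real.tanh (A2 * t))
    ∀ t : ℝ,
      (γ1 t ∈ Set.Ioo 0 π ∧
        Real.cos (γ1 t) = Real.sqrt (3 / 5) * Real.sinh (A2 * t) /
          Real.sqrt (χ ^ 2 + (1 + χ ^ 2) * Real.sinh (A2 * t) ^ 2)) ∧
      -- (i) the curve lies on the separatrix
      (G2 < Γ1 t ∧ Γ1 t ≤ L1) ∧
      (1 - G2 ^ 2 / (Γ1 t) ^ 2) * Real.sin (γ1 t) ^ 2 = 2 / 5 ∧
      -- (ii) it is a solution of the Hamiltonian system of `H₀¹²`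
      HasDerivAt γ1 (deriv (fun Γ => H012 L1 (γ1 t) Γ G2) (Γ1 t)) t ∧
      HasDerivAt Γ1 (-(deriv (fun γ => H012 L1 γ (Γ1 t) G2) (γ1 t))) t ∧
      HasDerivAt γ2 (deriv (fun G => H012 L1 (γ1 t) (Γ1 t) G) G2) t ∧
      HasDerivAt (fun _ : ℝ => G2) 0 t := by
  intro χ A2 γ1 Γ1 γ2 t
  have hq : 0 < √(3 / 5 : ℝ) := by positivity
  have hq2 : √(3 / 5 : ℝ) ^ 2 = 3 / 5 := Real.sq_sqrt (by norm_num)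
  have hu : √(5 / 3 : ℝ) = (√(3 / 5 : ℝ))⁻¹ := by
    rw [← Real.sqrt_inv]
    norm_num
  have hk2 : √(2 / 3 : ℝ) ^ 2 = 2 / 3 := Real.sq_sqrt (by norm_num)
  have hG2L : G2 ^ 2 < 3 / 5 * L1 ^ 2 := by
    rw [← hq2, ← mul_pow]
    exact pow_lt_pow_left₀ hlt hG2.le two_ne_zero
  have hD : 0 < 1 - (5 / 3) * G2 ^ 2 / L1 ^ 2 := by
    rw [sub_pos, div_lt_one (by positivity)]
    linarith
  have hr : 0 < √(1 - (5 / 3) * G2 ^ 2 / L1 ^ 2) := Real.sqrt_pos.2 hD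
  have hr2 : √(1 - (5 / 3) * G2 ^ 2 / L1 ^ 2) ^ 2 = 1 - (5 / 3) * G2 ^ 2 / L1 ^ 2 :=
    Real.sq_sqrt hD.le
  have hχ : 0 < χ := by positivity
  have hχ2 : χ ^ 2 * (1 - (5 / 3) * G2 ^ 2 / L1 ^ 2) = 2 / 3 * (G2 / L1) ^ 2 := by
    rw [← hr2, ← hk2, ← mul_pow, ← mul_pow, div_mul_cancel₀ _ hr.ne']
  have hAG : A2 * G2 = 6 * (1 - (5 / 3) * G2 ^ 2 / L1 ^ 2) * χ := by
    rw [← hr2]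
    simp only [A2, χ]
    field_simp
  have hAχ : A2 * χ * L1 ^ 2 = 4 * G2 := by
    have h : A2 * χ * L1 ^ 2 = 6 * √(2 / 3 : ℝ) ^ 2 * G2 := by
      calc A2 * χ * L1 ^ 2 = 6 / L1 * √(2 / 3) * (√(2 / 3) * (G2 / L1) /
            √(1 - (5 / 3) * G2 ^ 2 / L1 ^ 2) * √(1 - (5 / 3) * G2 ^ 2 / L1 ^ 2)) * L1 ^ 2 := by ring
        _ = 6 * √(2 / 3 : ℝ) ^ 2 * G2 := by
          rw [div_mul_cancel₀ _ hr.ne']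
          field_simp
    rw [h, hk2]
    ring
  clear_value χ A2
  set s := Real.sinh (A2 * t) with hs
  set c := Real.cosh (A2 * t) with hc
  have hc0 : 0 < c := Real.cosh_pos _
  have hcs : c ^ 2 = s ^ 2 + 1 := Real.cosh_sq _
  set m := √(χ ^ 2 + (1 + χ ^ 2) * s ^ 2) with hm
  set p := √(1 + (3 / 5) * (L1 ^ 2 / G2 ^ 2) * s ^ 2) with hp
  have hm0 : 0 < m := Real.sqrt_pos.2 (by positivity)
  have hm2 : m ^ 2 = χ ^ 2 + (1 + χ ^ 2) * s ^ 2 := Real.sq_sqrt (by positivity)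
  have hp0 : 0 < p := Real.sqrt_pos.2 (by positivity)
  have hp2 : p ^ 2 = 1 + (3 / 5) * (L1 ^ 2 / G2 ^ 2) * s ^ 2 := Real.sq_sqrt (by positivity)
  have hsinh : HasDerivAt (fun x => Real.sinh (A2 * x)) (c * A2) t := by
    simpa using ((hasDerivAt_id t).const_mul A2).sinh
  have hcosh : HasDerivAt (fun x => Real.cosh (A2 * x)) (s * A2) t := by
    simpa using ((hasDerivAt_id t).const_mul A2).cosh
  -- `sin γ₁(t) = χ p / m`
  have hχp : (χ * p) ^ 2 = m ^ 2 - 3 / 5 * s ^ 2 := by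
    rw [mul_pow, hp2, hm2]
    field_simp at hχ2 ⊢
    linear_combination s ^ 2 * hχ2
  have hone : 1 - (√(3 / 5) * s / m) ^ 2 = (χ * p / m) ^ 2 := by
    rw [div_pow, div_pow, mul_pow, hq2, hχp]
    field_simp
  have hpm : 0 < χ * p / m := by positivity
  have hsqrt : √(1 - (√(3 / 5) * s / m) ^ 2) = χ * p / m := by
    rw [hone, Real.sqrt_sq hpm.le]
  have habs : |√(3 / 5) * s / m| < 1 := by
    rw [← sq_lt_one_iff_abs_lt_one]
    nlinarith [pow_pos hpm 2]
  have hlo := (abs_lt.1 habs).1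
  have hhi := (abs_lt.1 habs).2
  have hγt : γ1 t = Real.arccos (√(3 / 5) * s / m) := rfl
  have hcos : Real.cos (γ1 t) = √(3 / 5) * s / m := Real.cos_arccos hlo.le hhi.le
  have hsin : Real.sin (γ1 t) = χ * p / m := by rw [hγt, Real.sin_arccos, hsqrt]
  have hΓt : Γ1 t = G2 * √(5 / 3) * p / c := rfl
  have hΓ0 : 0 < Γ1 t := by rw [hΓt]; positivity
  have hΓ2 : Γ1 t ^ 2 = (5 / 3 * G2 ^ 2 + L1 ^ 2 * s ^ 2) / c ^ 2 := by
    rw [hΓt, div_pow, mul_pow, mul_pow, Real.sq_sqrt (by norm_num), hp2]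
    field_simp
  have hΓp : Γ1 t ^ 2 = 5 / 3 * G2 ^ 2 * p ^ 2 / c ^ 2 := by
    rw [hΓt, div_pow, mul_pow, mul_pow, Real.sq_sqrt (by norm_num)]
    ring
  have hΓL : 1 - Γ1 t ^ 2 / L1 ^ 2 = (1 - (5 / 3) * G2 ^ 2 / L1 ^ 2) / c ^ 2 := by
    rw [hΓ2]
    field_simp
    rw [hcs]
    ring
  have hγ1' : HasDerivAt γ1 (-(√(3 / 5) * A2 * c * χ / (p * m ^ 2))) t := by
    have hQ : HasDerivAt (fun x => √(χ ^ 2 + (1 + χ ^ 2) * Real.sinh (A2 * x) ^ 2))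
        ((1 + χ ^ 2) * (2 * s * (c * A2)) / (2 * m)) t := by
      refine ((((hsinh.fun_pow 2).const_mul (1 + χ ^ 2)).const_add (χ ^ 2)).sqrt
        (by positivity)).congr_deriv ?_
      simp [hm, hs]
    refine ((Real.hasDerivAt_arccos hlo.ne' hhi.ne).comp t
      ((hsinh.const_mul (√(3 / 5))).fun_div hQ hm0.ne')).congr_deriv ?_
    simp only [← hs, ← hm, hsqrt]
    clear_value γ1 Γ1 γ2 m p s c
    field_simp
    linear_combination -A2 * hm2
  have hΓ1' : HasDerivAt Γ1 (4 * (1 - (5 / 3) * G2 ^ 2 / L1 ^ 2) * √(3 / 5) * s /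
      (χ * p * c ^ 2)) t := by
    have hP : HasDerivAt (fun x => √(1 + (3 / 5) * (L1 ^ 2 / G2 ^ 2) * Real.sinh (A2 * x) ^ 2))
        ((3 / 5) * (L1 ^ 2 / G2 ^ 2) * (2 * s * (c * A2)) / (2 * p)) t := by
      refine ((((hsinh.fun_pow 2).const_mul ((3 / 5) * (L1 ^ 2 / G2 ^ 2))).const_add 1).sqrt
        (by positivity)).congr_deriv ?_
      simp [hp, hs]
    refine ((hP.const_mul (G2 * √(5 / 3))).fun_div hcosh hc0.ne').congr_deriv ?_
    simp only [← hs, ← hc, ← hp, hu]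
    clear_value γ1 Γ1 γ2 m p s c
    have hA : A2 = 4 * G2 / (χ * L1 ^ 2) := by
      rw [eq_div_iff (by positivity), ← hAχ]
      ring
    have h : (3 / 5) * (L1 ^ 2 / G2 ^ 2) * c ^ 2 - p ^ 2 =
        (3 / 5) * (L1 ^ 2 / G2 ^ 2) * (1 - (5 / 3) * G2 ^ 2 / L1 ^ 2) := by
      rw [hp2, hcs]
      field_simp
      ring
    calc _ = G2 * A2 * s / (√(3 / 5) * p * c ^ 2) *
          ((3 / 5) * (L1 ^ 2 / G2 ^ 2) * c ^ 2 - p ^ 2) := by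
            field_simp
      _ = _ := by
        rw [h, hA]
        generalize 1 - (5 / 3) * G2 ^ 2 / L1 ^ 2 = D
        field_simp
        rw [hq2]
        ring
  have hγ2' : HasDerivAt γ2 (χ * A2 / m ^ 2 + 2 * G2 / L1 ^ 2) t := by
    have htanh : HasDerivAt (fun x => Real.tanh (A2 * x)) (A2 / c ^ 2) t := by
      simp only [Real.tanh_eq_sinh_div_cosh]
      refine (hsinh.fun_div hcosh hc0.ne').congr_deriv ?_
      rw [← hs, ← hc]
      congr 1
      linear_combination A2 * hcs
    refine ((((hasDerivAt_id t).const_mul (2 * G2 / L1 ^ 2)).const_add γ20).fun_add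
      (htanh.const_mul χ⁻¹).arctan).congr_deriv ?_
    rw [Real.tanh_eq_sinh_div_cosh, ← hs, ← hc]
    clear_value γ1 Γ1 γ2 m p s c
    have h : 1 + (χ⁻¹ * (s / c)) ^ 2 = m ^ 2 / (χ ^ 2 * c ^ 2) := by
      rw [hm2]
      field_simp
      rw [hcs]
      ring
    rw [h]
    field_simp
    ring
  have hπ : γ1 t < π := Real.arccos_lt_pi.2 hlo
  have hpos : 0 < γ1 t := Real.arccos_pos.2 hhi
  clear_value γ1 Γ1 γ2 m p s c
  have hsep : (1 - G2 ^ 2 / Γ1 t ^ 2) * Real.sin (γ1 t) ^ 2 = 2 / 5 := by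
    rw [hsin, hΓp]
    field_simp
    linear_combination 5 * hχp - 3 * χ ^ 2 * hcs + 3 * hm2
  refine ⟨⟨⟨hpos, hπ⟩, hcos⟩, ⟨?_, ?_⟩, hsep, hγ1'.congr_deriv ?_, hΓ1'.congr_deriv ?_,
    hγ2'.congr_deriv ?_, hasDerivAt_const t G2⟩
  · refine lt_of_pow_lt_pow_left₀ 2 hΓ0.le ?_
    rw [hΓ2, lt_div_iff₀ (by positivity), hcs]
    nlinarith [sq_nonneg s, pow_pos hG2 2, mul_nonneg (sub_nonneg.2 hG2L.le) (sq_nonneg s)]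
  · refine le_of_sq_le_sq ?_ hL1.le
    rw [hΓ2, div_le_iff₀ (by positivity), hcs]
    nlinarith
  · rw [(hasDerivAt_H012_action L1 (γ1 t) G2 hΓ0.ne').deriv, mul_assoc 5, hsep, hΓL, hsin, hΓt, hu]
    have hA : A2 = 6 * (1 - (5 / 3) * G2 ^ 2 / L1 ^ 2) * χ / G2 := by
      rw [eq_div_iff hG2.ne', hAG]
    rw [hA]
    generalize 1 - (5 / 3) * G2 ^ 2 / L1 ^ 2 = D
    field_simp
    linear_combination (10 * D * χ ^ 2 * c ^ 2 * L1 ^ 2 * √(3 / 5) ^ 2) * hq2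
  · rw [(hasDerivAt_H012_angle L1 (γ1 t) (Γ1 t) G2).deriv]
    have h : (1 - G2 ^ 2 / Γ1 t ^ 2) * Real.sin (γ1 t) = 2 / 5 * (m / (χ * p)) := by
      rw [← hsep, hsin]
      field_simp
    calc _ = 10 * ((1 - (5 / 3) * G2 ^ 2 / L1 ^ 2) / c ^ 2) * (2 / 5 * (m / (χ * p))) *
          (√(3 / 5) * s / m) := by
            field_simp
            ring
      _ = _ := by
        rw [← h, ← hΓL, ← hcos]
        ring
  · rw [(hasDerivAt_H012_parameter L1 (γ1 t) (Γ1 t) G2).deriv, hΓL, hΓp, hsin]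
    have hA : A2 = 6 * (1 - (5 / 3) * G2 ^ 2 / L1 ^ 2) * χ / G2 := by
      rw [eq_div_iff hG2.ne', hAG]
    rw [hA]
    generalize 1 - (5 / 3) * G2 ^ 2 / L1 ^ 2 = D
    field_simp
    ring
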